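/- For every positive integer s, every proper subdivision of K_{s,s} (a graph obtained from the complete bipartite graph K_{s,s} by replacing each edge with a path containing at least one internal vertex, with distinct edges replaced by internally vertex-disjoint paths) has induced matching treewidth at least s. -/

import Mathlib

open SimpleGraph

/-- A tree decomposition of a (finite, simple) graph `G`: a finite tree `T` together with
bags `bag x ⊆ V` such that every vertex is in a bag, every edge is inside some bag, and for
every vertex the set of nodes whose bag contains it induces a connected subtree of `T`. -/
structure TreeDecomp {V : Type} (G : SimpleGraph V) where
  ι : Type
  fintype_ι : Fintype ι
  T : SimpleGraph ι
  isTree : T.IsTree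
  bag : ι → Set V
  mem_bag : ∀ v : V, ∃ x : ι, v ∈ bag x
  edge_bag : ∀ ⦃u v : V⦄, G.Adj u v → ∃ x : ι, u ∈ bag x ∧ v ∈ bag x
  bag_conn : ∀ v : V, (T.induce {x : ι | v ∈ bag x}).Connected

/-- `a`, `b` enumerate the endpoints of an induced matching of size `n` in `G`:
the edges `a i — b i` are present, and endpoints of distinct edges are pairwise distinct
and non-adjacent. -/
def IsIndMatching {V : Type} (G : SimpleGraph V) {n : ℕ} (a b : Fin n → V) : Prop :=
  (∀ i, G.Adj (a i) (b i)) ∧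
  ∀ i j : Fin n, i ≠ j →
    a i ≠ a j ∧ a i ≠ b j ∧ b i ≠ a j ∧ b i ≠ b j ∧
    ¬ G.Adj (a i) (a j) ∧ ¬ G.Adj (a i) (b j) ∧ ¬ G.Adj (b i) (a j) ∧ ¬ G.Adj (b i) (b j)

/-- `μ(T,β) ≤ μ`: every induced matching touching a bag of the decomposition has size at
most `μ`. -/
def TreeDecomp.MuLE {V : Type} {G : SimpleGraph V} (td : TreeDecomp G) (μ : ℕ) : Prop :=
  ∀ (x : td.ι) (n : ℕ) (a b : Fin n → V),
    IsIndMatching G a b → (∀ i, a i ∈ td.bag x ∨ b i ∈ td.bag x) → n ≤ μ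

/-- `α(T,β) ≤ k`: every independent set contained in a single bag has size at most `k`. -/
def TreeDecomp.AlphaLE {V : Type} {G : SimpleGraph V} (td : TreeDecomp G) (k : ℕ) : Prop :=
  ∀ (x : td.ι) (I : Finset V), ↑I ⊆ td.bag x →
    ((I : Set V)).Pairwise (fun u v => ¬ G.Adj u v) → I.card ≤ k

/-- The induced matching treewidth `tree-μ(G)`: the least `n` admitting a tree decomposition
with `μ(T,β) ≤ n`. -/
noncomputable def treeMu {V : Type} (G : SimpleGraph V) : ℕ :=
  sInf {n | ∃ td : TreeDecomp G, td.MuLE n}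

/-- The tree-independence number `tree-α(G)`: the least `n` admitting a tree decomposition
with `α(T,β) ≤ n`. -/
noncomputable def treeAlpha {V : Type} (G : SimpleGraph V) : ℕ :=
  sInf {n | ∃ td : TreeDecomp G, td.AlphaLE n}

/-- Index type for the vertices of a subdivision of `K_{s,s}` in which the edge `ij` is
replaced by a path with `len i j` internal vertices: the two sides of branch vertices,
plus the internal path vertices. -/
def SubdivIdx (s : ℕ) (len : Fin s → Fin s → ℕ) : Type :=
  (Fin s ⊕ Fin s) ⊕ ((i : Fin s) × (j : Fin s) × Fin (len i j))

/-- Adjacency of the subdivision of `K_{s,s}`: each branch vertex `a i` (resp. `b j`) is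
joined to the first (resp. last) internal vertex of the path replacing the edge `ij`, and
consecutive internal vertices of a path are joined. -/
def SubdivAdj (s : ℕ) (len : Fin s → Fin s → ℕ) :
    SubdivIdx s len → SubdivIdx s len → Prop := fun x y =>
  (∃ (i j : Fin s) (k : Fin (len i j)),
      x = Sum.inl (Sum.inl i) ∧ y = Sum.inr ⟨i, j, k⟩ ∧ (k : ℕ) = 0) ∨
  (∃ (i j : Fin s) (k : Fin (len i j)),
      x = Sum.inr ⟨i, j, k⟩ ∧ y = Sum.inl (Sum.inl i) ∧ (k : ℕ) = 0) ∨
  (∃ (i j : Fin s) (k : Fin (len i j)),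
      x = Sum.inl (Sum.inr j) ∧ y = Sum.inr ⟨i, j, k⟩ ∧ (k : ℕ) = len i j - 1) ∨
  (∃ (i j : Fin s) (k : Fin (len i j)),
      x = Sum.inr ⟨i, j, k⟩ ∧ y = Sum.inl (Sum.inr j) ∧ (k : ℕ) = len i j - 1) ∨
  (∃ (i j : Fin s) (k k' : Fin (len i j)),
      x = Sum.inr ⟨i, j, k⟩ ∧ y = Sum.inr ⟨i, j, k'⟩ ∧
      ((k : ℕ) + 1 = (k' : ℕ) ∨ (k' : ℕ) + 1 = (k : ℕ)))

/-- `H` is a proper subdivision of `K_{s,s}`: every edge of `K_{s,s}` is replaced by a path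
with at least one internal vertex, distinct edges being replaced by internally disjoint
paths. -/
def IsProperSubdivKss (s : ℕ) {W : Type} (H : SimpleGraph W) : Prop :=
  ∃ (len : Fin s → Fin s → ℕ) (φ : SubdivIdx s len → W),
    (∀ i j, 1 ≤ len i j) ∧ Function.Bijective φ ∧
    ∀ x y : SubdivIdx s len, H.Adj (φ x) (φ y) ↔ SubdivAdj s len x y

/-!
In a tree decomposition the nodes whose bags meet a connected vertex set form a subtree, and
adjacent sets give intersecting subtrees. Of two intersecting subtrees of a rooted tree, each
contains the point of the other nearest to the root whenever that point is at least as deep as its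
own. Hence if every subtree in one finite family meets every subtree in another, the deepest of
all these nearest points lies in every member of one of the two families.

For the subdivision, take the stars `A i` around the branch vertices of the first side, containing
the interiors of all paths leaving them, and for each branch vertex of the second side an edge
`B j` at it. Every `A i` is joined to every `B j`, so some bag meets all the `A i` or all the
`B j`. The members of each family are connected with at least two vertices, pairwise disjoint and
pairwise non-adjacent, so choosing in each of them an edge at a vertex of the bag gives an induced
matching of size `s` touching the bag.
-/

section Tree

variable {V : Type*} {G : SimpleGraph V} {S S' : Set V} {r t t' x y z : V}

lemma exists_isPath_support_subset (hS : (G.induce S).Preconnected) (hx : x ∈ S) (hy : y ∈ S) :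
    ∃ p : G.Walk x y, p.IsPath ∧ ∀ z ∈ p.support, z ∈ S := by
  obtain ⟨p, hp⟩ := (hS ⟨x, hx⟩ ⟨y, hy⟩).exists_isPath
  let f := Embedding.induce (G := G) S
  refine ⟨p.map f.toHom, hp.map f.injective, fun z hz => ?_⟩
  obtain ⟨w, -, rfl⟩ := List.mem_map.1 (Walk.support_map f.toHom p ▸ hz)
  exact w.2

lemma support_subset_of_isAcyclic (hG : G.IsAcyclic) (hS : (G.induce S).Preconnected)
    (hx : x ∈ S) (hy : y ∈ S) {p : G.Walk x y} (hp : p.IsPath) : ∀ z ∈ p.support, z ∈ S := by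
  obtain ⟨q, hq, hqS⟩ := exists_isPath_support_subset hS hx hy
  obtain rfl : p = q := congrArg Subtype.val ((hG.subsingleton_path x y).elim ⟨p, hp⟩ ⟨q, hq⟩)
  exact hqS

lemma eq_of_mem_support_of_length_eq_dist {p : G.Walk r t} (hp : p.length = G.dist r t)
    (hx : x ∈ p.support) (htx : G.dist r t ≤ G.dist r x) : x = t := by
  classical
  have hlen := congrArg Walk.length (p.take_spec hx)
  have hdist := dist_le (p.takeUntil x hx)
  rw [Walk.length_append] at hlen
  exact Walk.eq_of_length_eq_zero (p := p.dropUntil x hx) (by omega)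

lemma isPath_append_of_forall_eq {p : G.Walk x y} {q : G.Walk y z} (hp : p.IsPath) (hq : q.IsPath)
    (hpq : ∀ w ∈ p.support, w ∈ q.support → w = y) : (p.append q).IsPath := by
  have hy : y ∉ q.support.tail := by
    have hnodup := hq.support_nodup
    rw [← Walk.cons_tail_support] at hnodup
    exact (List.nodup_cons.1 hnodup).1
  rw [Walk.isPath_def, Walk.support_append, List.nodup_append]
  refine ⟨hp.support_nodup, hq.support_nodup.tail, ?_⟩
  rintro w hwp _ hwq rfl
  exact hy (hpq w hwp (List.mem_of_mem_tail hwq) ▸ hwq)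

lemma mem_support_of_isMinOn_dist (hG : G.IsAcyclic) (hS : (G.induce S).Preconnected)
    (ht : t ∈ S) (hz : z ∈ S) (hmin : IsMinOn (G.dist r) S t) {p : G.Walk r z} (hp : p.IsPath) :
    t ∈ p.support := by
  obtain ⟨q, hq, hqS⟩ := exists_isPath_support_subset hS ht hz
  obtain ⟨g, hg, hgdist⟩ := (p.reachable.trans q.reachable.symm).exists_path_of_dist
  -- Since `t` is nearest to `r`, the geodesic `g` meets `S`, hence `q`, only in `t`.
  have hgq : (g.append q).IsPath := isPath_append_of_forall_eq hg hq fun w hwg hwq =>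
    eq_of_mem_support_of_length_eq_dist hgdist hwg (hmin (hqS w hwq))
  obtain rfl : p = g.append q :=
    congrArg Subtype.val ((hG.subsingleton_path r z).elim ⟨p, hp⟩ ⟨_, hgq⟩)
  simp

lemma mem_of_isMinOn_dist_le (hG : G.IsAcyclic) (hS : (G.induce S).Preconnected)
    (hS' : (G.induce S').Preconnected) (ht : t ∈ S) (ht' : t' ∈ S')
    (hmin : IsMinOn (G.dist r) S t) (hmin' : IsMinOn (G.dist r) S' t')
    (hrz : G.Reachable r z) (hz : z ∈ S ∩ S') (hle : G.dist r t' ≤ G.dist r t) : t ∈ S' := by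
  classical
  obtain ⟨p, hp, hpdist⟩ := hrz.exists_path_of_dist
  have htp := mem_support_of_isMinOn_dist hG hS ht hz.1 hmin hp
  have ht'p := mem_support_of_isMinOn_dist hG hS' ht' hz.2 hmin' hp
  rw [← p.take_spec ht'p, Walk.mem_support_append_iff] at htp
  rcases htp with htp | htp
  · have hgeo : (p.takeUntil t' ht'p).length = G.dist r t' :=
      length_eq_dist_of_subwalk hpdist (p.isSubwalk_takeUntil ht'p)
    rwa [eq_of_mem_support_of_length_eq_dist hgeo htp hle]
  · exact support_subset_of_isAcyclic hG hS' ht' hz.2 (hp.dropUntil ht'p) t htp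

theorem exists_forall_mem_or_forall_mem_of_isTree {ι κ : Type*} [Finite ι] [Finite κ]
    (hG : G.IsTree) {A : ι → Set V} {B : κ → Set V} (hA : ∀ i, (G.induce (A i)).Connected)
    (hB : ∀ j, (G.induce (B j)).Connected) (hAB : ∀ i j, (A i ∩ B j).Nonempty) :
    ∃ x, (∀ i, x ∈ A i) ∨ ∀ j, x ∈ B j := by
  obtain ⟨r⟩ := hG.connected.nonempty
  have exists_nearest {S : Set V} (hS : (G.induce S).Connected) : ∃ t ∈ S, IsMinOn (G.dist r) S t :=
    have hne := Set.nonempty_coe_sort.1 hS.nonempty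
    ⟨_, Function.argminOn_mem (G.dist r) S hne, fun _ => Function.argminOn_le (G.dist r) S⟩
  rcases isEmpty_or_nonempty ι with _ | _
  · exact ⟨r, .inl isEmptyElim⟩
  rcases isEmpty_or_nonempty κ with _ | _
  · exact ⟨r, .inr isEmptyElim⟩
  choose a haA hamin using fun i => exists_nearest (hA i)
  choose b hbB hbmin using fun j => exists_nearest (hB j)
  obtain ⟨i, hi⟩ := Finite.exists_max fun i => G.dist r (a i)
  obtain ⟨j, hj⟩ := Finite.exists_max fun j => G.dist r (b j)
  rcases le_total (G.dist r (a i)) (G.dist r (b j)) with hij | hij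
  · refine ⟨b j, .inl fun i' => ?_⟩
    obtain ⟨z, hz⟩ := hAB i' j
    exact mem_of_isMinOn_dist_le hG.isAcyclic (hB j).preconnected (hA i').preconnected (hbB j)
      (haA i') (hbmin j) (hamin i') (hG.connected r z) hz.symm ((hi i').trans hij)
  · refine ⟨a i, .inr fun j' => ?_⟩
    obtain ⟨z, hz⟩ := hAB i j'
    exact mem_of_isMinOn_dist_le hG.isAcyclic (hA i).preconnected (hB j').preconnected (haA i)
      (hbB j') (hamin i) (hbmin j') (hG.connected r z) hz ((hj j').trans hij)

end Tree

section TreeDecomposition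

variable {V W : Type} {G : SimpleGraph V} {H : SimpleGraph W}

/-- The nodes of the tree whose bags meet a vertex set `X`. -/
def TreeDecomp.trace (td : TreeDecomp G) (X : Set V) : Set td.ι :=
  {x | (td.bag x ∩ X).Nonempty}

/- Along a walk in `X`, consecutive vertices have overlapping subtrees by the edge axiom. -/
lemma TreeDecomp.connected_induce_trace (td : TreeDecomp G) {X : Set V}
    (hX : (G.induce X).Connected) : (td.T.induce (td.trace X)).Connected := by
  obtain ⟨u⟩ := hX.nonempty
  obtain ⟨x₀, hx₀⟩ := td.mem_bag u
  refine (connected_iff_exists_forall_reachable _).2 ⟨⟨x₀, u, hx₀, u.2⟩, ?_⟩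
  have reachable_of_mem (v : X) {x y : td.ι} (hx : (v : V) ∈ td.bag x) (hy : (v : V) ∈ td.bag y) :
      (td.T.induce (td.trace X)).Reachable ⟨x, v, hx, v.2⟩ ⟨y, v, hy, v.2⟩ :=
    ((td.bag_conn v).preconnected ⟨x, hx⟩ ⟨y, hy⟩).map
      (induceHomOfLE td.T (s' := td.trace X) fun _ hz => ⟨v, hz, v.2⟩).toHom
  suffices ∀ v : X, ∀ x, ∀ hx : (v : V) ∈ td.bag x,
      (td.T.induce (td.trace X)).Reachable ⟨x₀, u, hx₀, u.2⟩ ⟨x, v, hx, v.2⟩ by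
    rintro ⟨x, v, hx, hv⟩
    exact this ⟨v, hv⟩ x hx
  intro v
  induction (reachable_iff_reflTransGen u v).1 (hX u v) with
  | refl => exact fun x hx => reachable_of_mem u hx₀ hx
  | @tail v w _ hvw ih =>
    intro x hx
    obtain ⟨y, hvy, hwy⟩ := td.edge_bag hvw
    exact (ih y hvy).trans (reachable_of_mem w hwy hx)

theorem TreeDecomp.exists_bag_inter_nonempty (td : TreeDecomp G) {ι κ : Type*} [Finite ι]
    [Finite κ] {A : ι → Set V} {B : κ → Set V} (hA : ∀ i, (G.induce (A i)).Connected)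
    (hB : ∀ j, (G.induce (B j)).Connected) (hAB : ∀ i j, ∃ u ∈ A i, ∃ v ∈ B j, G.Adj u v) :
    ∃ x, (∀ i, (td.bag x ∩ A i).Nonempty) ∨ ∀ j, (td.bag x ∩ B j).Nonempty := by
  refine exists_forall_mem_or_forall_mem_of_isTree td.isTree
    (fun i => td.connected_induce_trace (hA i)) (fun j => td.connected_induce_trace (hB j))
    fun i j => ?_
  obtain ⟨u, hu, v, hv, huv⟩ := hAB i j
  obtain ⟨x, hux, hvx⟩ := td.edge_bag huv
  exact ⟨x, ⟨u, hux, hu⟩, ⟨v, hvx, hv⟩⟩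

/-- A family of connected vertex sets with at least two vertices each, pairwise disjoint and
without edges between them (expressed as completeness in the complement graph). Choosing an edge
in each set gives an induced matching. -/
structure IsSeparatedFamily {ι : Type*} (G : SimpleGraph V) (X : ι → Set V) : Prop where
  connected (i : ι) : (G.induce (X i)).Connected
  nontrivial (i : ι) : (X i).Nontrivial
  pairwise : Pairwise fun i j => Gᶜ.IsCompleteBetween (X i) (X j)

lemma IsSeparatedFamily.exists_isIndMatching {n : ℕ} {X : Fin n → Set V}
    (hX : IsSeparatedFamily G X) {S : Set V} (hS : ∀ i, (S ∩ X i).Nonempty) :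
    ∃ a b : Fin n → V, IsIndMatching G a b ∧ ∀ i, a i ∈ S := by
  choose a haS haX using hS
  have exists_adj (i) : ∃ b ∈ X i, G.Adj (a i) b := by
    have := (hX.nontrivial i).coe_sort
    obtain ⟨b, hb⟩ := (hX.connected i).preconnected.exists_adj_of_nontrivial ⟨a i, haX i⟩
    exact ⟨b, b.2, hb⟩
  choose b hbX hab using exists_adj
  refine ⟨a, b, ⟨hab, fun i j hij => ?_⟩, haS⟩
  have separated {u v : V} (hu : u ∈ X i) (hv : v ∈ X j) : u ≠ v ∧ ¬ G.Adj u v :=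
    (compl_adj G u v).1 (hX.pairwise hij hu hv)
  have haa := separated (haX i) (haX j)
  have hab := separated (haX i) (hbX j)
  have hba := separated (hbX i) (haX j)
  have hbb := separated (hbX i) (hbX j)
  exact ⟨haa.1, hab.1, hba.1, hbb.1, haa.2, hab.2, hba.2, hbb.2⟩

lemma TreeDecomp.MuLE.le_of_inter_nonempty {td : TreeDecomp G} {μ n : ℕ} (hμ : td.MuLE μ)
    {X : Fin n → Set V} (hX : IsSeparatedFamily G X) {x : td.ι}
    (hx : ∀ i, (td.bag x ∩ X i).Nonempty) : n ≤ μ := by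
  obtain ⟨a, b, hab, ha⟩ := hX.exists_isIndMatching hx
  exact hμ x n a b hab fun i => .inl (ha i)

lemma IsIndMatching.le_card [Finite V] {n : ℕ} {a b : Fin n → V} (h : IsIndMatching G a b) :
    n ≤ Nat.card V := by
  have ha : Function.Injective a := fun i j hij => by
    by_contra hne
    exact (h.2 i j hne).1 hij
  simpa using Nat.card_le_card_of_injective a ha

lemma IsIndMatching.map {n : ℕ} {a b : Fin n → V} (h : IsIndMatching G a b) (f : G ↪g H) :
    IsIndMatching H (f ∘ a) (f ∘ b) := by
  simpa only [IsIndMatching, Function.comp_apply, f.map_adj_iff, ne_eq, f.injective.eq_iff] using h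

/-- The decomposition with a single bag, showing that the infimum in `treeMu` is taken over a
nonempty set when the graph is finite. -/
def TreeDecomp.singleBag (G : SimpleGraph V) : TreeDecomp G where
  ι := Unit
  fintype_ι := inferInstance
  T := ⊥
  isTree := .of_subsingleton
  bag _ := Set.univ
  mem_bag _ := ⟨(), trivial⟩
  edge_bag _ _ _ := ⟨(), trivial, trivial⟩
  bag_conn v :=
    have : Nonempty {_x : Unit | v ∈ Set.univ} := ⟨⟨(), trivial⟩⟩
    IsTree.of_subsingleton.connected

/-- The restriction of a tree decomposition to an induced subgraph. -/
def TreeDecomp.comap (f : G ↪g H) (td : TreeDecomp H) : TreeDecomp G where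
  ι := td.ι
  fintype_ι := td.fintype_ι
  T := td.T
  isTree := td.isTree
  bag x := f ⁻¹' td.bag x
  mem_bag v := td.mem_bag (f v)
  edge_bag _ _ huv := td.edge_bag (f.map_adj_iff.2 huv)
  bag_conn v := td.bag_conn (f v)

lemma TreeDecomp.MuLE.comap {td : TreeDecomp H} {μ : ℕ} (h : td.MuLE μ) (f : G ↪g H) :
    (td.comap f).MuLE μ :=
  fun x n _ _ hab htouch => h x n _ _ (hab.map f) htouch

lemma exists_muLE_treeMu [Finite V] (G : SimpleGraph V) :
    ∃ td : TreeDecomp G, td.MuLE (treeMu G) :=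
  Nat.sInf_mem (s := {n | ∃ td : TreeDecomp G, td.MuLE n})
    ⟨Nat.card V, .singleBag G, fun _ _ _ _ hab _ => hab.le_card⟩

theorem treeMu_le_of_embedding [Finite W] (f : G ↪g H) : treeMu G ≤ treeMu H := by
  obtain ⟨td, htd⟩ := exists_muLE_treeMu H
  exact Nat.sInf_le ⟨td.comap f, htd.comap f⟩

theorem min_le_treeMu_of_isSeparatedFamily [Finite V] {m n : ℕ} {A : Fin m → Set V}
    {B : Fin n → Set V} (hA : IsSeparatedFamily G A) (hB : IsSeparatedFamily G B)
    (hAB : ∀ i j, ∃ u ∈ A i, ∃ v ∈ B j, G.Adj u v) : min m n ≤ treeMu G := by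
  obtain ⟨td, htd⟩ := exists_muLE_treeMu G
  obtain ⟨x, hx | hx⟩ := td.exists_bag_inter_nonempty hA.connected hB.connected hAB
  · exact min_le_of_left_le (htd.le_of_inter_nonempty hA hx)
  · exact min_le_of_right_le (htd.le_of_inter_nonempty hB hx)

lemma pairwise_isCompleteBetween_compl {ι : Type*} {X : ι → Set V} {label : V → Option ι}
    (hlabel : ∀ ⦃u v i j⦄, G.Adj u v → label u = some i → label v = some j → i = j)
    (hX : ∀ i, ∀ v ∈ X i, label v = some i) :
    Pairwise fun i j => Gᶜ.IsCompleteBetween (X i) (X j) := by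
  intro i j hij u hu v hv
  refine (compl_adj G u v).2 ⟨?_, fun huv => hij (hlabel huv (hX i u hu) (hX j v hv))⟩
  rintro rfl
  exact hij (Option.some_injective _ ((hX i u hu).symm.trans (hX j u hv)))

end TreeDecomposition

section Subdivision

variable {s : ℕ} {len : Fin s → Fin s → ℕ}

instance : Finite (SubdivIdx s len) := by
  unfold SubdivIdx
  infer_instance

/-- The subdivision of `K_{s,s}` in which the edge `ij` is replaced by a path with `len i j`
internal vertices. -/
def subdivGraph (s : ℕ) (len : Fin s → Fin s → ℕ) : SimpleGraph (SubdivIdx s len) where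
  Adj := SubdivAdj s len
  symm := ⟨by
    rintro x y (⟨i, j, k, rfl, rfl, hk⟩ | ⟨i, j, k, rfl, rfl, hk⟩ | ⟨i, j, k, rfl, rfl, hk⟩ |
      ⟨i, j, k, rfl, rfl, hk⟩ | ⟨i, j, k, k', rfl, rfl, hk⟩)
    · exact .inr (.inl ⟨i, j, k, rfl, rfl, hk⟩)
    · exact .inl ⟨i, j, k, rfl, rfl, hk⟩
    · exact .inr (.inr (.inr (.inl ⟨i, j, k, rfl, rfl, hk⟩)))
    · exact .inr (.inr (.inl ⟨i, j, k, rfl, rfl, hk⟩))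
    · exact .inr (.inr (.inr (.inr ⟨i, j, k', k, rfl, rfl, hk.symm⟩)))⟩
  loopless := ⟨by
    rintro _ (⟨_, _, _, rfl, h, -⟩ | ⟨_, _, _, rfl, h, -⟩ | ⟨_, _, _, rfl, h, -⟩ |
      ⟨_, _, _, rfl, h, -⟩ | ⟨_, _, k, k', rfl, h, hk⟩) <;> cases h
    omega⟩

lemma subdivGraph_adj_first (i j : Fin s) (h : 0 < len i j) :
    (subdivGraph s len).Adj (.inl (.inl i)) (.inr ⟨i, j, ⟨0, h⟩⟩) :=
  .inl ⟨i, j, _, rfl, rfl, rfl⟩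

lemma subdivGraph_adj_last (i j : Fin s) (h : len i j - 1 < len i j) :
    (subdivGraph s len).Adj (.inr ⟨i, j, ⟨len i j - 1, h⟩⟩) (.inl (.inr j)) :=
  .inr (.inr (.inr (.inl ⟨i, j, _, rfl, rfl, rfl⟩)))

lemma subdivGraph_adj_succ (i j : Fin s) (k : ℕ) (h : k + 1 < len i j) :
    (subdivGraph s len).Adj (.inr ⟨i, j, ⟨k, k.lt_succ_self.trans h⟩⟩)
      (.inr ⟨i, j, ⟨k + 1, h⟩⟩) :=
  .inr (.inr (.inr (.inr ⟨i, j, _, _, rfl, rfl, .inl rfl⟩)))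

lemma IsProperSubdivKss.exists_iso {W : Type} {H : SimpleGraph W} (hH : IsProperSubdivKss s H) :
    ∃ len : Fin s → Fin s → ℕ, (∀ i j, 0 < len i j) ∧ Nonempty (subdivGraph s len ≃g H) := by
  obtain ⟨len, φ, hlen, hφ, hadj⟩ := hH
  exact ⟨len, hlen, ⟨⟨.ofBijective φ hφ, hadj _ _⟩⟩⟩

/-- The index `i` of the edge `ij` of `K_{s,s}` carrying a vertex of the subdivision; a branch
vertex of the second side lies on edges with different `i` and has none. -/
def SubdivIdx.row : SubdivIdx s len → Option (Fin s)
  | .inl (.inl i) => some i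
  | .inl (.inr _) => none
  | .inr ⟨i, _, _⟩ => some i

/-- The index `j` of the edge `ij` of `K_{s,s}` carrying a vertex of the subdivision; a branch
vertex of the first side lies on edges with different `j` and has none. -/
def SubdivIdx.col : SubdivIdx s len → Option (Fin s)
  | .inl (.inl _) => none
  | .inl (.inr j) => some j
  | .inr ⟨_, j, _⟩ => some j

lemma SubdivIdx.row_eq_of_adj ⦃x y : SubdivIdx s len⦄ ⦃i j : Fin s⦄
    (h : (subdivGraph s len).Adj x y) (hx : x.row = some i) (hy : y.row = some j) : i = j := by
  rcases h with ⟨_, _, _, rfl, rfl, -⟩ | ⟨_, _, _, rfl, rfl, -⟩ | ⟨_, _, _, rfl, rfl, -⟩ |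
    ⟨_, _, _, rfl, rfl, -⟩ | ⟨_, _, _, _, rfl, rfl, -⟩ <;> simp_all [row]

lemma SubdivIdx.col_eq_of_adj ⦃x y : SubdivIdx s len⦄ ⦃i j : Fin s⦄
    (h : (subdivGraph s len).Adj x y) (hx : x.col = some i) (hy : y.col = some j) : i = j := by
  rcases h with ⟨_, _, _, rfl, rfl, -⟩ | ⟨_, _, _, rfl, rfl, -⟩ | ⟨_, _, _, rfl, rfl, -⟩ |
    ⟨_, _, _, rfl, rfl, -⟩ | ⟨_, _, _, _, rfl, rfl, -⟩ <;> simp_all [col]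

/-- The `i`-th branch vertex of the first side together with the interiors of all paths leaving
it. -/
def rowStar (len : Fin s → Fin s → ℕ) (i : Fin s) : Set (SubdivIdx s len) :=
  {x | x.row = some i}

lemma connected_induce_rowStar (i : Fin s) :
    ((subdivGraph s len).induce (rowStar len i)).Connected := by
  refine (connected_iff_exists_forall_reachable _).2 ⟨⟨.inl (.inl i), rfl⟩, ?_⟩
  have reachable_path (j : Fin s) (k : ℕ) (hk : k < len i j) :
      ((subdivGraph s len).induce (rowStar len i)).Reachable ⟨.inl (.inl i), rfl⟩
        ⟨.inr ⟨i, j, ⟨k, hk⟩⟩, rfl⟩ := by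
    induction k with
    | zero => exact Adj.reachable (induce_adj.2 (subdivGraph_adj_first i j hk))
    | succ k ih =>
      exact (ih _).trans (Adj.reachable (induce_adj.2 (subdivGraph_adj_succ i j k hk)))
  rintro ⟨(i' | j) | ⟨i', j, k⟩, hx⟩
  · obtain rfl : i' = i := Option.some_injective _ hx
    exact .rfl
  · cases hx
  · obtain rfl : i' = i := Option.some_injective _ hx
    exact reachable_path j k k.2

lemma isSeparatedFamily_rowStar (hlen : ∀ i j, 0 < len i j) :
    IsSeparatedFamily (subdivGraph s len) (rowStar len) where
  connected := connected_induce_rowStar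
  nontrivial i := Set.nontrivial_of_mem_mem_ne rfl rfl (subdivGraph_adj_first i i (hlen i i)).ne
  pairwise := pairwise_isCompleteBetween_compl SubdivIdx.row_eq_of_adj fun _ _ hx => hx

/-- The edge of the subdivided path `jj` at the `j`-th branch vertex of the second side. -/
def colEdge (hlen : ∀ i j, 0 < len i j) (j : Fin s) : Set (SubdivIdx s len) :=
  {.inr ⟨j, j, ⟨len j j - 1, Nat.sub_one_lt_of_lt (hlen j j)⟩⟩, .inl (.inr j)}

lemma isSeparatedFamily_colEdge (hlen : ∀ i j, 0 < len i j) :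
    IsSeparatedFamily (subdivGraph s len) (colEdge hlen) where
  connected j := induce_pair_connected_of_adj (subdivGraph_adj_last j j _)
  nontrivial j := Set.nontrivial_pair (subdivGraph_adj_last j j _).ne
  pairwise := pairwise_isCompleteBetween_compl SubdivIdx.col_eq_of_adj <| by
    rintro j _ (rfl | rfl) <;> rfl

theorem le_treeMu_subdivGraph (hlen : ∀ i j, 0 < len i j) : s ≤ treeMu (subdivGraph s len) := by
  have hadj (i j : Fin s) : ∃ u ∈ rowStar len i, ∃ v ∈ colEdge hlen j,
      (subdivGraph s len).Adj u v :=
    ⟨_, rfl, _, .inr rfl, subdivGraph_adj_last i j (Nat.sub_one_lt_of_lt (hlen i j))⟩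
  simpa only [min_self] using min_le_treeMu_of_isSeparatedFamily (isSeparatedFamily_rowStar hlen)
    (isSeparatedFamily_colEdge hlen) hadj

end Subdivision

/-- Every proper subdivision of `K_{s,s}` has induced matching treewidth at least `s`. -/
theorem stmt15 (s : ℕ) (hs : 0 < s) (W : Type) [Fintype W] (H : SimpleGraph W)
    (hH : IsProperSubdivKss s H) : s ≤ treeMu H := by
  obtain ⟨len, hlen, ⟨e⟩⟩ := hH.exists_iso
  exact (le_treeMu_subdivGraph hlen).trans (treeMu_le_of_embedding e.toEmbedding)
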